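/- The reductions →βch (checkers β), →τ (silent β), and →⊛ (interaction β) of the checkers calculus are each confluent. -/

import Mathlib

set_option autoImplicit false

/-! ### Players -/

inductive Player : Type
  | white
  | black
deriving DecidableEq

/-- The opposite player. -/
def Player.op : Player → Player
  | .white => .black
  | .black => .white

/-- `gamma p q` is `0` if the players agree (silent) and `1` otherwise (interaction). -/
def Player.gamma (p q : Player) : ℕ := if p = q then 0 else 1

/-! ### Ordinary λ-terms (de Bruijn representation) -/

inductive Lam : Type
  | var : ℕ → Lam
  | lam : Lam → Lam
  | app : Lam → Lam → Lam
deriving DecidableEq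

namespace Lam

/-- Shift the free de Bruijn indices ≥ `d` by one. -/
def liftAt : Lam → ℕ → Lam
  | .var n, d => .var (if n < d then n else n + 1)
  | .lam t, d => .lam (t.liftAt (d + 1))
  | .app t u, d => .app (t.liftAt d) (u.liftAt d)

/-- Capture-avoiding substitution of `u` for the de Bruijn index `x`. -/
def subst : Lam → ℕ → Lam → Lam
  | .var n, x, u => if n = x then u else if x < n then .var (n - 1) else .var n
  | .lam t, x, u => .lam (t.subst (x + 1) (u.liftAt 0))
  | .app t s, x, u => .app (t.subst x u) (s.subst x u)

end Lam

/-- Root β-rule: `(λx.t) u ↦ t[x:=u]`. -/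
inductive LBetaRoot : Lam → Lam → Prop
  | beta (t u : Lam) : LBetaRoot (.app (.lam t) u) (t.subst 0 u)

/-- Root η-rule: `λx. t x ↦ t` with `x ∉ FV(t)` (enforced by the lifting). -/
inductive LEtaRoot : Lam → Lam → Prop
  | eta (t : Lam) : LEtaRoot (.lam (.app (t.liftAt 0) (.var 0))) t

/-- Closure of a root relation under all contexts. -/
inductive LFull (R : Lam → Lam → Prop) : Lam → Lam → Prop
  | root {t u : Lam} : R t u → LFull R t u
  | lam {t u : Lam} : LFull R t u → LFull R (.lam t) (.lam u)
  | appL {t t' : Lam} (u : Lam) : LFull R t t' → LFull R (.app t u) (.app t' u)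
  | appR (t : Lam) {u u' : Lam} : LFull R u u' → LFull R (.app t u) (.app t u')

/-- Closure under applicative spine contexts `⟨·⟩ t1 … tk`. -/
inductive LSpine (R : Lam → Lam → Prop) : Lam → Lam → Prop
  | root {t u : Lam} : R t u → LSpine R t u
  | appL {t t' : Lam} (u : Lam) : LSpine R t t' → LSpine R (.app t u) (.app t' u)

/-- Closure under head contexts `λx1…xn.⟨·⟩ t1 … tk`. -/
inductive LHead (R : Lam → Lam → Prop) : Lam → Lam → Prop
  | spine {t u : Lam} : LSpine R t u → LHead R t u
  | lam {t u : Lam} : LHead R t u → LHead R (.lam t) (.lam u)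

/-- β-reduction. -/
def LBeta : Lam → Lam → Prop := LFull LBetaRoot
/-- η-reduction. -/
def LEta : Lam → Lam → Prop := LFull LEtaRoot
/-- Head reduction. -/
def LHStep : Lam → Lam → Prop := LHead LBetaRoot
/-- Multistep head reduction. -/
def LHSteps : Lam → Lam → Prop := Relation.ReflTransGen LHStep

/-- β-conversion (reflexive-symmetric-transitive closure of β-reduction). -/
def LBetaConv : Lam → Lam → Prop :=
  Relation.ReflTransGen (fun a b => LBeta a b ∨ LBeta b a)
/-- η-conversion. -/
def LEtaConv : Lam → Lam → Prop :=
  Relation.ReflTransGen (fun a b => LEta a b ∨ LEta b a)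

/-- Head normal forms: no head step out of `t`. -/
def Lam.LHNF (t : Lam) : Prop := ∀ u, ¬ LHStep t u

/-- Head convergence: `t ⇓h`. -/
def Lam.HConv (t : Lam) : Prop := ∃ h, LHSteps t h ∧ h.LHNF

/-- Ordinary contexts (one hole). -/
inductive LCtx : Type
  | hole : LCtx
  | lam : LCtx → LCtx
  | appL : LCtx → Lam → LCtx
  | appR : Lam → LCtx → LCtx

/-- Plugging (allowing variable capture). -/
def LCtx.fill : LCtx → Lam → Lam
  | .hole, t => t
  | .lam C, t => .lam (C.fill t)
  | .appL C u, t => .app (C.fill t) u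
  | .appR s C, t => .app s (C.fill t)

/-- Head contextual preorder on λ-terms. -/
def CtxLe (t u : Lam) : Prop := ∀ C : LCtx, (C.fill t).HConv → (C.fill u).HConv

/-! ### Checkers terms -/

inductive CTerm : Type
  | var : ℕ → CTerm
  | lam : Player → CTerm → CTerm
  | app : Player → CTerm → CTerm → CTerm
deriving DecidableEq

namespace CTerm

/-- Shift the free de Bruijn indices ≥ `d` by one. -/
def liftAt : CTerm → ℕ → CTerm
  | .var n, d => .var (if n < d then n else n + 1)
  | .lam p t, d => .lam p (t.liftAt (d + 1))
  | .app p t u, d => .app p (t.liftAt d) (u.liftAt d)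

/-- Capture-avoiding substitution of `u` for the de Bruijn index `x`. -/
def subst : CTerm → ℕ → CTerm → CTerm
  | .var n, x, u => if n = x then u else if x < n then .var (n - 1) else .var n
  | .lam p t, x, u => .lam p (t.subst (x + 1) (u.liftAt 0))
  | .app p t s, x, u => .app p (t.subst x u) (s.subst x u)

/-- The underlying ordinary λ-term of a checkers term. -/
def untag : CTerm → Lam
  | .var n => .var n
  | .lam _ t => .lam t.untag
  | .app _ t u => .app t.untag u.untag

end CTerm

/-- Player lifting: tag every abstraction and application with player `p`. -/
def Lam.tag : Lam → Player → CTerm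
  | .var n, _ => .var n
  | .lam t, p => .lam p (t.tag p)
  | .app t u, p => .app p (t.tag p) (u.tag p)

/-- Silent β root rule: the abstraction and the application carry the same player. -/
inductive SilentRoot : CTerm → CTerm → Prop
  | beta (p : Player) (t u : CTerm) : SilentRoot (.app p (.lam p t) u) (t.subst 0 u)

/-- Interaction β root rule: the application carries the opposite player of the abstraction. -/
inductive InterRoot : CTerm → CTerm → Prop
  | beta (p : Player) (t u : CTerm) : InterRoot (.app p.op (.lam p t) u) (t.subst 0 u)

/-- Closure of a root relation under all checkers contexts. -/
inductive CFull (R : CTerm → CTerm → Prop) : CTerm → CTerm → Prop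
  | root {t u : CTerm} : R t u → CFull R t u
  | lam (p : Player) {t u : CTerm} : CFull R t u → CFull R (.lam p t) (.lam p u)
  | appL (p : Player) {t t' : CTerm} (u : CTerm) : CFull R t t' → CFull R (.app p t u) (.app p t' u)
  | appR (p : Player) (t : CTerm) {u u' : CTerm} : CFull R u u' → CFull R (.app p t u) (.app p t u')

/-- Closure under applicative spine contexts `⟨·⟩ @_{q1} t1 … @_{qk} tk`. -/
inductive CSpine (R : CTerm → CTerm → Prop) : CTerm → CTerm → Prop
  | root {t u : CTerm} : R t u → CSpine R t u
  | appL (p : Player) {t t' : CTerm} (u : CTerm) : CSpine R t t' → CSpine R (.app p t u) (.app p t' u)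

/-- Closure under checkers head contexts `λ_{p1}x1…λ_{pn}xn.⟨·⟩ @_{q1} t1 … @_{qk} tk`. -/
inductive CHead (R : CTerm → CTerm → Prop) : CTerm → CTerm → Prop
  | spine {t u : CTerm} : CSpine R t u → CHead R t u
  | lam (p : Player) {t u : CTerm} : CHead R t u → CHead R (.lam p t) (.lam p u)

/-- Silent β-reduction `→τ`. -/
def StepTau : CTerm → CTerm → Prop := CFull SilentRoot
/-- Interaction β-reduction `→⊛`. -/
def StepInt : CTerm → CTerm → Prop := CFull InterRoot
/-- Checkers β-reduction `→βch`. -/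
def StepBch (t u : CTerm) : Prop := StepTau t u ∨ StepInt t u

/-- Silent head reduction `→hτ`. -/
def HStepTau : CTerm → CTerm → Prop := CHead SilentRoot
/-- Interaction head reduction `→h⊛`. -/
def HStepInt : CTerm → CTerm → Prop := CHead InterRoot
/-- Checkers head reduction `→hch`. -/
def HStepCh (t u : CTerm) : Prop := HStepTau t u ∨ HStepInt t u

/-- Checkers head normal form. -/
def CTerm.HNF (t : CTerm) : Prop := ∀ u, ¬ HStepCh t u

/-- `BigStep t k` means `t ⇓^k`: the (deterministic) checkers head evaluation of `t`
terminates and performs exactly `k` interaction steps. -/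
inductive BigStep : CTerm → ℕ → Prop
  | nf {t : CTerm} : t.HNF → BigStep t 0
  | silent {t u : CTerm} {k : ℕ} : HStepTau t u → BigStep u k → BigStep t k
  | inter {t u : CTerm} {k : ℕ} : HStepInt t u → BigStep u k → BigStep t (k + 1)

/-- `HRed t n i u`: a checkers head reduction sequence from `t` to `u` of length `n`
containing exactly `i` interaction steps. -/
inductive HRed : CTerm → ℕ → ℕ → CTerm → Prop
  | refl (t : CTerm) : HRed t 0 0 t
  | silent {t u s : CTerm} {n i : ℕ} : HStepTau t u → HRed u n i s → HRed t (n + 1) i s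
  | inter {t u s : CTerm} {n i : ℕ} : HStepInt t u → HRed u n i s → HRed t (n + 1) (i + 1) s

/-- Checkers contexts (one hole). -/
inductive CCtx : Type
  | hole : CCtx
  | lam : Player → CCtx → CCtx
  | appL : Player → CCtx → CTerm → CCtx
  | appR : Player → CTerm → CCtx → CCtx

/-- Plugging (allowing variable capture). -/
def CCtx.fill : CCtx → CTerm → CTerm
  | .hole, t => t
  | .lam p C, t => .lam p (C.fill t)
  | .appL p C u, t => .app p (C.fill t) u
  | .appR p s C, t => .app p s (C.fill t)

/-- Player lifting of ordinary contexts. -/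
def LCtx.tag : LCtx → Player → CCtx
  | .hole, _ => .hole
  | .lam C, p => .lam p (C.tag p)
  | .appL C u, p => .appL p (C.tag p) (u.tag p)
  | .appR s C, p => .appR p (s.tag p) (C.tag p)

/-- Checkers interaction preorder `≼ctx⊛` on checkers terms. -/
def IntCtxLe (t u : CTerm) : Prop :=
  ∀ (C : CCtx) (k : ℕ), BigStep (C.fill t) k → BigStep (C.fill u) k

/-- Checkers interaction improvement `≼imp⊛` on checkers terms. -/
def ImpCtxLe (t u : CTerm) : Prop :=
  ∀ (C : CCtx) (k : ℕ), BigStep (C.fill t) k → ∃ k', k' ≤ k ∧ BigStep (C.fill u) k'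

/-- Interaction preorder `⊑int` on ordinary λ-terms, via black lifting. -/
def IntLe (t u : Lam) : Prop := IntCtxLe (t.tag .black) (u.tag .black)

/-- Interaction improvement `⊑int·imp` on ordinary λ-terms, via black lifting. -/
def ImpLe (t u : Lam) : Prop := ImpCtxLe (t.tag .black) (u.tag .black)

/-- Interaction equivalence `≡int`. -/
def IntEq (t u : Lam) : Prop := IntLe t u ∧ IntLe u t

/-- Silent conversion `=τ`: reflexive-symmetric-transitive closure of `→τ`. -/
def SilentConv : CTerm → CTerm → Prop :=
  Relation.ReflTransGen (fun a b => StepTau a b ∨ StepTau b a)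


/-- A relation is confluent. -/
def Confluent (R : CTerm → CTerm → Prop) : Prop :=
  ∀ t u₁ u₂, Relation.ReflTransGen R t u₁ → Relation.ReflTransGen R t u₂ →
    ∃ s, Relation.ReflTransGen R u₁ s ∧ Relation.ReflTransGen R u₂ s

/-!
Following Tait and Martin-Löf, confluence is obtained from the diamond property of parallel
reduction. That argument only uses that a β-redex stays a β-redex when its subterms are reduced or
substituted into. Reduction and substitution never change the players on the application and the
abstraction of a redex, so the argument works for the β-rule restricted to any set of pairs of
players; the three reductions are instances of this.
-/

namespace CTerm

theorem liftAt_liftAt (t : CTerm) {k d : ℕ} (h : k ≤ d) :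
    (t.liftAt k).liftAt (d + 1) = (t.liftAt d).liftAt k := by
  induction t generalizing k d with
  | var n => grind [liftAt]
  | lam p t ih => simp only [liftAt, ih (Nat.succ_le_succ h)]
  | app p t u iht ihu => simp only [liftAt, iht h, ihu h]

theorem subst_liftAt (t : CTerm) (x : ℕ) (u : CTerm) : (t.liftAt x).subst x u = t := by
  induction t generalizing x u with
  | var n => grind [liftAt, subst]
  | lam p t ih => simp only [liftAt, subst, ih]
  | app p t s iht ihs => simp only [liftAt, subst, iht, ihs]

theorem liftAt_subst_of_le (t u : CTerm) {x d : ℕ} (h : x ≤ d) :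
    (t.subst x u).liftAt d = (t.liftAt (d + 1)).subst x (u.liftAt d) := by
  induction t generalizing x d u with
  | var n => grind [liftAt, subst]
  | lam p t ih => simp only [liftAt, subst, ih _ (Nat.succ_le_succ h), liftAt_liftAt u d.zero_le]
  | app p t s iht ihs => simp only [liftAt, subst, iht _ h, ihs _ h]

theorem liftAt_subst_of_ge (t u : CTerm) {x d : ℕ} (h : d ≤ x) :
    (t.subst x u).liftAt d = (t.liftAt d).subst (x + 1) (u.liftAt d) := by
  induction t generalizing x d u with
  | var n => grind [liftAt, subst]
  | lam p t ih => simp only [liftAt, subst, ih _ (Nat.succ_le_succ h), liftAt_liftAt u d.zero_le]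
  | app p t s iht ihs => simp only [liftAt, subst, iht _ h, ihs _ h]

theorem subst_subst (t u v : CTerm) {x y : ℕ} (h : x ≤ y) :
    (t.subst x u).subst y v = (t.subst (y + 1) (v.liftAt x)).subst x (u.subst y v) := by
  induction t generalizing x y u v with
  | var n => grind [subst, subst_liftAt]
  | lam p t ih =>
    simp only [subst, ih _ _ (Nat.succ_le_succ h), liftAt_liftAt v x.zero_le,
      liftAt_subst_of_ge u v y.zero_le]
  | app p t s iht ihs => simp only [subst, iht _ _ h, ihs _ _ h]

end CTerm

namespace CFull

theorem mono {R S : CTerm → CTerm → Prop} (hRS : R ≤ S) : CFull R ≤ CFull S := by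
  intro t u h
  induction h with
  | root h => exact .root (hRS _ _ h)
  | lam p _ ih => exact .lam p ih
  | appL p u _ ih => exact .appL p u ih
  | appR p t _ ih => exact .appR p t ih

theorem sup (R S : CTerm → CTerm → Prop) : CFull (R ⊔ S) = CFull R ⊔ CFull S := by
  refine le_antisymm (fun t u h => ?_) (sup_le (mono le_sup_left) (mono le_sup_right))
  induction h with
  | root h => exact h.imp .root .root
  | lam p _ ih => exact ih.imp (.lam p) (.lam p)
  | appL p u _ ih => exact ih.imp (.appL p u) (.appL p u)
  | appR p t _ ih => exact ih.imp (.appR p t) (.appR p t)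

section Steps

open Relation (ReflTransGen)

variable {R : CTerm → CTerm → Prop}

theorem reflTransGen_lam (p : Player) {t t' : CTerm} (h : ReflTransGen (CFull R) t t') :
    ReflTransGen (CFull R) (.lam p t) (.lam p t') :=
  h.lift (CTerm.lam p) fun _ _ => .lam p

theorem reflTransGen_app (p : Player) {t t' u u' : CTerm} (ht : ReflTransGen (CFull R) t t')
    (hu : ReflTransGen (CFull R) u u') :
    ReflTransGen (CFull R) (.app p t u) (.app p t' u') :=
  (ht.lift (CTerm.app p · u) fun _ _ => .appL p u).trans
    (hu.lift (CTerm.app p t') fun _ _ => .appR p t')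

end Steps

end CFull

/-- The root β-rule restricted to the redexes `(λ_q x.t) @_p u` with `A p q`. The silent,
interaction and checkers β-rules are the cases where `A p q` is `p = q`, `p = q.op` and their
disjunction. -/
inductive BetaRoot (A : Player → Player → Prop) : CTerm → CTerm → Prop
  | beta {p q : Player} (hA : A p q) (t u : CTerm) :
      BetaRoot A (.app p (.lam q t) u) (t.subst 0 u)

/-- Parallel β-reduction: contracts simultaneously any set of the redexes of `BetaRoot A` that are
already present in a term. -/
inductive ParBeta (A : Player → Player → Prop) : CTerm → CTerm → Prop
  | var (n : ℕ) : ParBeta A (.var n) (.var n)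
  | lam (p : Player) {t t' : CTerm} : ParBeta A t t' → ParBeta A (.lam p t) (.lam p t')
  | app (p : Player) {t t' u u' : CTerm} : ParBeta A t t' → ParBeta A u u' →
      ParBeta A (.app p t u) (.app p t' u')
  | beta {p q : Player} {t t' u u' : CTerm} : A p q → ParBeta A t t' → ParBeta A u u' →
      ParBeta A (.app p (.lam q t) u) (t'.subst 0 u')

namespace ParBeta

open Relation (Join ReflTransGen)

variable {A : Player → Player → Prop}

theorem refl (t : CTerm) : ParBeta A t t := by
  induction t with
  | var n => exact .var n
  | lam p t ih => exact .lam p ih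
  | app p t u iht ihu => exact .app p iht ihu

theorem cFull_betaRoot_le : CFull (BetaRoot A) ≤ ParBeta A := by
  intro t u h
  induction h with
  | root h => cases h with | beta hA t u => exact .beta hA (refl t) (refl u)
  | lam p _ ih => exact .lam p ih
  | appL p u _ ih => exact .app p ih (refl u)
  | appR p t _ ih => exact .app p (refl t) ih

theorem le_reflTransGen : ParBeta A ≤ ReflTransGen (CFull (BetaRoot A)) := by
  intro t u h
  induction h with
  | var n => exact .refl
  | lam p _ ih => exact CFull.reflTransGen_lam p ih
  | app p _ _ iht ihu => exact CFull.reflTransGen_app p iht ihu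
  | beta hA _ _ iht ihu =>
    exact (CFull.reflTransGen_app _ (CFull.reflTransGen_lam _ iht) ihu).tail
      (.root (.beta hA _ _))

theorem liftAt {t t' : CTerm} (h : ParBeta A t t') (d : ℕ) :
    ParBeta A (t.liftAt d) (t'.liftAt d) := by
  induction h generalizing d with
  | var n => exact refl _
  | lam p _ ih => exact .lam p (ih _)
  | app p _ _ iht ihu => exact .app p (iht d) (ihu d)
  | beta hA _ _ iht ihu =>
    rw [CTerm.liftAt_subst_of_le _ _ d.zero_le]
    exact .beta hA (iht _) (ihu d)

theorem subst {t t' u u' : CTerm} (ht : ParBeta A t t') (x : ℕ) (hu : ParBeta A u u') :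
    ParBeta A (t.subst x u) (t'.subst x u') := by
  induction ht generalizing x u u' with
  | var n =>
    simp only [CTerm.subst]
    split_ifs
    exacts [hu, .var _, .var _]
  | lam p _ ih => exact .lam p (ih _ (hu.liftAt 0))
  | app p _ _ iht ihs => exact .app p (iht x hu) (ihs x hu)
  | beta hA _ _ iht ihs =>
    rw [CTerm.subst_subst _ _ _ x.zero_le]
    exact .beta hA (iht _ (hu.liftAt 0)) (ihs x hu)

section Join

variable {t₁ t₂ u₁ u₂ : CTerm}

theorem join_lam (p : Player) :
    Join (ParBeta A) t₁ t₂ → Join (ParBeta A) (.lam p t₁) (.lam p t₂) :=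
  fun ⟨_, h₁, h₂⟩ => ⟨_, .lam p h₁, .lam p h₂⟩

theorem join_of_join_lam {p : Player} :
    Join (ParBeta A) (.lam p t₁) (.lam p t₂) → Join (ParBeta A) t₁ t₂ :=
  fun ⟨_, .lam _ h₁, .lam _ h₂⟩ => ⟨_, h₁, h₂⟩

theorem join_app (p : Player) : Join (ParBeta A) t₁ t₂ → Join (ParBeta A) u₁ u₂ →
    Join (ParBeta A) (.app p t₁ u₁) (.app p t₂ u₂) :=
  fun ⟨_, ht₁, ht₂⟩ ⟨_, hu₁, hu₂⟩ => ⟨_, .app p ht₁ hu₁, .app p ht₂ hu₂⟩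

theorem join_subst (x : ℕ) : Join (ParBeta A) t₁ t₂ → Join (ParBeta A) u₁ u₂ →
    Join (ParBeta A) (t₁.subst x u₁) (t₂.subst x u₂) :=
  fun ⟨_, ht₁, ht₂⟩ ⟨_, hu₁, hu₂⟩ => ⟨_, ht₁.subst x hu₁, ht₂.subst x hu₂⟩

theorem join_app_lam_subst {p q : Player} (hA : A p q) :
    Join (ParBeta A) t₁ t₂ → Join (ParBeta A) u₁ u₂ →
      Join (ParBeta A) (.app p (.lam q t₁) u₁) (t₂.subst 0 u₂) :=
  fun ⟨_, ht₁, ht₂⟩ ⟨_, hu₁, hu₂⟩ => ⟨_, .beta hA ht₁ hu₁, ht₂.subst 0 hu₂⟩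

end Join

theorem diamond {t u₁ u₂ : CTerm} (h₁ : ParBeta A t u₁) (h₂ : ParBeta A t u₂) :
    Join (ParBeta A) u₁ u₂ := by
  induction h₁ generalizing u₂ with
  | var n => exact ⟨u₂, h₂, refl u₂⟩
  | lam p _ ih => cases h₂ with | lam _ h => exact join_lam p (ih h)
  | app p ht₁ _ iht ihu =>
    cases h₂ with
    | app _ ht₂ hu₂ => exact join_app p (iht ht₂) (ihu hu₂)
    | beta hA ht₂ hu₂ =>
      cases ht₁
      exact join_app_lam_subst hA (join_of_join_lam (iht (.lam _ ht₂))) (ihu hu₂)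
  | beta hA _ _ iht ihu =>
    cases h₂ with
    | app _ ht₂ hu₂ =>
      cases ht₂ with
      | lam _ ht₂ =>
        exact symm (join_app_lam_subst hA (symm (iht ht₂)) (symm (ihu hu₂)))
    | beta _ ht₂ hu₂ => exact join_subst 0 (iht ht₂) (ihu hu₂)

end ParBeta

theorem confluent_of_diamond {P : CTerm → CTerm → Prop}
    (hP : ∀ t u₁ u₂, P t u₁ → P t u₂ → Relation.Join P u₁ u₂) : Confluent P :=
  fun _ _ _ => Relation.church_rosser fun t u₁ u₂ h₁ h₂ =>
    let ⟨s, hs₁, hs₂⟩ := hP t u₁ u₂ h₁ h₂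
    ⟨s, .single hs₁, .single hs₂⟩

theorem Confluent.of_le_of_le_reflTransGen {R P : CTerm → CTerm → Prop} (hP : Confluent P)
    (hRP : R ≤ P) (hPR : P ≤ Relation.ReflTransGen R) : Confluent R := by
  have hstar : Relation.ReflTransGen R = Relation.ReflTransGen P :=
    le_antisymm (Relation.ReflTransGen.mono hRP) (Relation.reflTransGen_closed hPR)
  simpa only [Confluent, hstar] using hP

theorem confluent_cFull_betaRoot (A : Player → Player → Prop) :
    Confluent (CFull (BetaRoot A)) :=
  (confluent_of_diamond fun _ _ _ => ParBeta.diamond).of_le_of_le_reflTransGen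
    ParBeta.cFull_betaRoot_le ParBeta.le_reflTransGen

theorem silentRoot_eq_betaRoot : SilentRoot = BetaRoot fun p q => p = q := by
  ext t u
  constructor
  · rintro ⟨p, t, u⟩
    exact .beta rfl t u
  · rintro ⟨rfl, t, u⟩
    exact .beta _ t u

theorem interRoot_eq_betaRoot : InterRoot = BetaRoot fun p q => p = q.op := by
  ext t u
  constructor
  · rintro ⟨p, t, u⟩
    exact .beta (by rfl) t u
  · rintro ⟨rfl, t, u⟩
    exact .beta _ t u

theorem BetaRoot.sup (A B : Player → Player → Prop) :
    BetaRoot A ⊔ BetaRoot B = BetaRoot (A ⊔ B) := by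
  ext t u
  constructor
  · rintro (⟨hA, t, u⟩ | ⟨hB, t, u⟩)
    exacts [.beta (.inl hA) t u, .beta (.inr hB) t u]
  · rintro ⟨hA | hB, t, u⟩
    exacts [.inl (.beta hA t u), .inr (.beta hB t u)]

theorem stepTau_eq_cFull_betaRoot : StepTau = CFull (BetaRoot fun p q => p = q) :=
  congrArg CFull silentRoot_eq_betaRoot

theorem stepInt_eq_cFull_betaRoot : StepInt = CFull (BetaRoot fun p q => p = q.op) :=
  congrArg CFull interRoot_eq_betaRoot

theorem stepBch_eq_cFull_betaRoot : StepBch = CFull (BetaRoot fun p q => p = q ∨ p = q.op) :=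
  calc
    StepBch = StepTau ⊔ StepInt := rfl
    _ = CFull (SilentRoot ⊔ InterRoot) := (CFull.sup _ _).symm
    _ = CFull (BetaRoot fun p q => p = q ∨ p = q.op) := by
      rw [silentRoot_eq_betaRoot, interRoot_eq_betaRoot, BetaRoot.sup]; rfl

/-- The reductions `→βch`, `→τ` and `→⊛` of the checkers calculus are each confluent. -/
theorem checkers_reductions_confluent :
    Confluent StepBch ∧ Confluent StepTau ∧ Confluent StepInt := by
  rw [stepBch_eq_cFull_betaRoot, stepTau_eq_cFull_betaRoot, stepInt_eq_cFull_betaRoot]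
  exact ⟨confluent_cFull_betaRoot _, confluent_cFull_betaRoot _, confluent_cFull_betaRoot _⟩
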